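/- arXiv:1502.07107 — 6 statements merged into one kernel-verified Lean document; each statement's English description precedes it below -/
import Mathlib

section
/- For every r ≥ 0 the n×n complex matrix A + G(r) is invertible. -/
open Matrix MeasureTheory
open scoped ComplexOrder

/-- The quadratic form of an `L²` Gram matrix of real functions is the integral of a square norm. -/
lemma star_dotProduct_gram_mulVec {ι : Type*} [Fintype ι] {s : ι → ℝ → ℝ}
    (hs : ∀ i, Continuous (s i)) (r : ℝ) (x : ι → ℂ) :
    star x ⬝ᵥ (Matrix.of fun i j => ((∫ ρ in (0:ℝ)..r, s i ρ * s j ρ : ℝ) : ℂ)) *ᵥ x =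
      ((∫ ρ in (0:ℝ)..r, Complex.normSq (∑ i, x i * (s i ρ : ℂ)) : ℝ) : ℂ) := by
  have hsq : ∀ ρ, (Complex.normSq (∑ i, x i * (s i ρ : ℂ)) : ℂ) =
      ∑ i, ∑ j, star (x i) * (((s i ρ * s j ρ : ℝ) : ℂ) * x j) := by
    intro ρ
    rw [Complex.normSq_eq_conj_mul_self, map_sum, Finset.sum_mul_sum]
    refine Finset.sum_congr rfl fun i _ => Finset.sum_congr rfl fun j _ => ?_
    simp only [map_mul, Complex.conj_ofReal, Complex.ofReal_mul, Complex.star_def]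
    ring
  rw [← intervalIntegral.integral_ofReal]
  simp only [hsq]
  have hcont : ∀ i j, Continuous fun ρ => star (x i) * (((s i ρ * s j ρ : ℝ) : ℂ) * x j) :=
    fun i j => by
      have := hs i
      have := hs j
      fun_prop
  rw [intervalIntegral.integral_finsetSum fun i _ =>
    (continuous_finsetSum _ fun j _ => hcont i j).intervalIntegrable _ _]
  refine Finset.sum_congr rfl fun i _ => ?_
  rw [intervalIntegral.integral_finsetSum fun j _ => (hcont i j).intervalIntegrable _ _]
  simp only [Matrix.mulVec, dotProduct, Finset.mul_sum, Pi.star_apply, Matrix.of_apply,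
    intervalIntegral.integral_const_mul, intervalIntegral.integral_mul_const,
    intervalIntegral.integral_ofReal]

/-- The `L²(0, r)` Gram matrix of continuous real functions is positive semidefinite. -/
lemma posSemidef_gram {ι : Type*} [Fintype ι] {s : ι → ℝ → ℝ}
    (hs : ∀ i, Continuous (s i)) {r : ℝ} (hr : 0 ≤ r) :
    (Matrix.of fun i j => ((∫ ρ in (0:ℝ)..r, s i ρ * s j ρ : ℝ) : ℂ)).PosSemidef := by
  refine Matrix.PosSemidef.of_dotProduct_mulVec_nonneg ?_ fun x => ?_
  · ext i j
    simp only [Matrix.conjTranspose_apply, Matrix.of_apply, Complex.star_def,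
      Complex.conj_ofReal, mul_comm]
  · rw [star_dotProduct_gram_mulVec hs]
    exact Complex.zero_le_real.2
      (intervalIntegral.integral_nonneg hr fun ρ _ => Complex.normSq_nonneg _)

/-- Adding a diagonal matrix with nonzero entries in the closed right half-plane to a positive
semidefinite matrix yields an invertible matrix. -/
lemma Matrix.PosSemidef.isUnit_diagonal_add {ι : Type*} [Fintype ι] [DecidableEq ι]
    {M : Matrix ι ι ℂ} (hM : M.PosSemidef) {a : ι → ℂ} (ha : ∀ j, a j ≠ 0 ∧ 0 ≤ (a j).re) :
    IsUnit (Matrix.diagonal a + M) := by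
  rw [← Matrix.mulVec_injective_iff_isUnit, ← Matrix.coe_mulVecLin,
    injective_iff_map_eq_zero]
  intro v hv
  rw [Matrix.mulVecLin_apply, Matrix.add_mulVec] at hv
  have hform : star v ⬝ᵥ diagonal a *ᵥ v + star v ⬝ᵥ M *ᵥ v = 0 := by
    rw [← dotProduct_add, hv, dotProduct_zero]
  have hdiag : 0 ≤ (star v ⬝ᵥ diagonal a *ᵥ v).re := by
    simp only [dotProduct, Complex.re_sum, Matrix.mulVec_diagonal, Pi.star_apply]
    refine Finset.sum_nonneg fun j _ => ?_
    rw [mul_left_comm, Complex.star_def, ← Complex.normSq_eq_conj_mul_self, Complex.re_mul_ofReal]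
    exact mul_nonneg (ha j).2 (Complex.normSq_nonneg _)
  have hnonneg := Complex.nonneg_iff.1 (hM.dotProduct_mulVec_nonneg v)
  have hre := congrArg Complex.re hform
  rw [Complex.add_re, Complex.zero_re] at hre
  have hMv : M *ᵥ v = 0 := (hM.dotProduct_mulVec_zero_iff v).1
    (Complex.ext (by rw [Complex.zero_re]; linarith) hnonneg.2.symm)
  rw [hMv, add_zero] at hv
  ext j
  have hj := congrFun hv j
  rw [Matrix.mulVec_diagonal] at hj
  exact (mul_eq_zero.1 hj).resolve_left (ha j).1

/-- `A + G(r)` is invertible for every `r ≥ 0`. -/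
theorem stmt_1 (n : ℕ) (hn : 1 ≤ n) (μ : Fin n → ℝ)
    (hμpos : ∀ i, 0 < μ i) (hμanti : StrictAnti μ)
    (G : ℝ → Matrix (Fin n) (Fin n) ℂ)
    (hG : ∀ (r : ℝ) (i j : Fin n),
      G r i j = ((∫ ρ in (0:ℝ)..r, Real.sin (μ i * ρ) * Real.sin (μ j * ρ) : ℝ) : ℂ))
    (a : Fin n → ℂ) (ha : ∀ j, a j ≠ 0 ∧ 0 ≤ (a j).re) :
    ∀ r : ℝ, 0 ≤ r → IsUnit (Matrix.diagonal a + G r) := by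
  intro r hr
  have hGram : G r = Matrix.of fun i j =>
      ((∫ ρ in (0:ℝ)..r, Real.sin (μ i * ρ) * Real.sin (μ j * ρ) : ℝ) : ℂ) :=
    Matrix.ext (hG r)
  rw [hGram]
  exact (posSemidef_gram (s := fun i ρ => Real.sin (μ i * ρ))
    (fun i => by fun_prop) hr).isUnit_diagonal_add ha
end

section
/- There exists a constant C > 0 such that for every j ∈ {1, …, n} and every r ≥ 0 one has |v_j(r)| ≤ C · r/(1 + r²). -/
open Matrix MeasureTheory

lemma abs_integral_cos_mul_le {c : ℝ} (hc : c ≠ 0) (r : ℝ) :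
    |∫ ρ in (0:ℝ)..r, Real.cos (c * ρ)| ≤ |c|⁻¹ := by
  rw [intervalIntegral.integral_comp_mul_left (fun x => Real.cos x) hc, integral_cos]
  simp only [mul_zero, Real.sin_zero, sub_zero, smul_eq_mul, abs_mul, abs_inv]
  exact mul_le_of_le_one_right (by positivity) (Real.abs_sin_le_one _)

lemma integral_sin_mul_sin (a b r : ℝ) :
    ∫ ρ in (0:ℝ)..r, Real.sin (a * ρ) * Real.sin (b * ρ) =
      (∫ ρ in (0:ℝ)..r, Real.cos ((a - b) * ρ)) / 2 -
        (∫ ρ in (0:ℝ)..r, Real.cos ((a + b) * ρ)) / 2 := by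
  rw [← sub_div, ← intervalIntegral.integral_sub
    (Continuous.intervalIntegrable (by fun_prop) _ _)
    (Continuous.intervalIntegrable (by fun_prop) _ _), ← intervalIntegral.integral_div]
  refine intervalIntegral.integral_congr fun ρ _ => ?_
  simp only [sub_mul, add_mul, Real.cos_sub, Real.cos_add]
  ring

/-- The Gram matrix of `sin (μ i ρ)` on `[0, r]` stays within bounded distance of `r / 2`. -/
lemma exists_abs_integral_sin_mul_sin_sub_le {ι : Type*} [Fintype ι] [DecidableEq ι] {μ : ι → ℝ}
    (hpos : ∀ i, 0 < μ i) (hinj : Function.Injective μ) :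
    ∃ K : ℝ, 0 ≤ K ∧ ∀ i j r,
      |(∫ ρ in (0:ℝ)..r, Real.sin (μ i * ρ) * Real.sin (μ j * ρ)) -
        if i = j then r / 2 else 0| ≤ K := by
  have hentry : ∀ i j, ∀ r,
      |(∫ ρ in (0:ℝ)..r, Real.sin (μ i * ρ) * Real.sin (μ j * ρ)) -
        if i = j then r / 2 else 0| ≤ |μ i - μ j|⁻¹ + |μ i + μ j|⁻¹ := by
    intro i j r
    rw [integral_sin_mul_sin]
    have hsum := abs_le.1 (abs_integral_cos_mul_le (add_pos (hpos i) (hpos j)).ne' r)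
    have hnonneg : 0 ≤ |μ i + μ j|⁻¹ := by positivity
    split_ifs with h
    · subst h
      simp only [sub_self, zero_mul, Real.cos_zero, intervalIntegral.integral_const, sub_zero,
        smul_eq_mul, mul_one, abs_zero, _root_.inv_zero, zero_add]
      rw [abs_le]
      constructor <;> linarith [hsum.1, hsum.2]
    · have hdiff := abs_le.1
        (abs_integral_cos_mul_le (sub_ne_zero.2 (fun e => h (hinj e))) r)
      have hnonneg' : 0 ≤ |μ i - μ j|⁻¹ := by positivity
      rw [sub_zero, abs_le]
      constructor <;> linarith [hsum.1, hsum.2, hdiff.1, hdiff.2]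
  refine ⟨∑ i, ∑ j, (|μ i - μ j|⁻¹ + |μ i + μ j|⁻¹), by positivity, fun i j r => ?_⟩
  refine (hentry i j r).trans ?_
  refine (Finset.single_le_sum (f := fun j => |μ i - μ j|⁻¹ + |μ i + μ j|⁻¹)
    (fun _ _ => by positivity) (Finset.mem_univ j)).trans ?_
  exact Finset.single_le_sum (f := fun i => ∑ j, (|μ i - μ j|⁻¹ + |μ i + μ j|⁻¹))
    (fun _ _ => by positivity) (Finset.mem_univ i)

/-- A matrix within entrywise distance `K` of `t • 1` expands the sup norm by at least
`t - card ι * K`. -/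
lemma mul_norm_le_of_norm_sub_smul_one_le {ι : Type*} [Fintype ι] [DecidableEq ι]
    {M : Matrix ι ι ℂ} {t K : ℝ} (ht : 0 ≤ t)
    (hM : ∀ i j, ‖M i j - if i = j then (t : ℂ) else 0‖ ≤ K) (w : ι → ℂ) :
    t * ‖w‖ ≤ ‖M *ᵥ w‖ + Fintype.card ι * K * ‖w‖ := by
  have hrow : ‖(t : ℂ) • w‖ ≤ ‖M *ᵥ w‖ + Fintype.card ι * K * ‖w‖ := by
    rcases isEmpty_or_nonempty ι with h | ⟨⟨i₀⟩⟩
    · simp [Subsingleton.elim w 0]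
    have hK : 0 ≤ K := (norm_nonneg _).trans (hM i₀ i₀)
    refine (pi_norm_le_iff_of_nonneg (by positivity)).2 fun i => ?_
    have hsplit : ((t : ℂ) • w) i =
        (M *ᵥ w) i - ∑ j, (M i j - if i = j then (t : ℂ) else 0) * w j := by
      simp [Matrix.mulVec, dotProduct, sub_mul, Finset.sum_sub_distrib]
    rw [hsplit]
    refine (norm_sub_le _ _).trans (add_le_add (norm_le_pi_norm _ i) ?_)
    calc ‖∑ j, (M i j - if i = j then (t : ℂ) else 0) * w j‖
        ≤ ∑ _j : ι, K * ‖w‖ := norm_sum_le_of_le _ fun j _ => by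
          rw [norm_mul]
          exact mul_le_mul (hM i j) (norm_le_pi_norm w j) (norm_nonneg _) hK
      _ = Fintype.card ι * K * ‖w‖ := by simp [mul_assoc]
  rwa [norm_smul, Complex.norm_real, Real.norm_of_nonneg ht] at hrow

lemma ContinuousOn.matrix_inv {X ι : Type*} [TopologicalSpace X] [Fintype ι] [DecidableEq ι]
    {M : X → Matrix ι ι ℂ} {S : Set X} (hM : ContinuousOn M S) (hunit : ∀ x ∈ S, IsUnit (M x)) :
    ContinuousOn (fun x => (M x)⁻¹) S := by
  simp only [Matrix.inv_def, Ring.inverse_eq_inv']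
  refine ContinuousOn.smul (ContinuousOn.inv₀ (f := fun x => (M x).det) ?_ fun x hx => ?_) ?_
  · exact (Continuous.matrix_det (A := fun N : Matrix ι ι ℂ => N) continuous_id).comp_continuousOn hM
  · exact ((Matrix.isUnit_iff_isUnit_det _).1 (hunit x hx)).ne_zero
  · exact (Continuous.matrix_adjugate (A := fun N : Matrix ι ι ℂ => N)
      continuous_id).comp_continuousOn hM

/-- the pointwise bound `|v_j(r)| ≤ C r/(1+r²)`. -/
theorem stmt_6 (n : ℕ) (hn : 1 ≤ n) (μ : Fin n → ℝ)
    (hμpos : ∀ i, 0 < μ i) (hμanti : StrictAnti μ)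
    (G : ℝ → Matrix (Fin n) (Fin n) ℂ)
    (hG : ∀ (r : ℝ) (i j : Fin n),
      G r i j = ((∫ ρ in (0:ℝ)..r, Real.sin (μ i * ρ) * Real.sin (μ j * ρ) : ℝ) : ℂ))
    (a : Fin n → ℂ) (ha : ∀ j, a j ≠ 0 ∧ 0 ≤ (a j).re) (hinv : ∀ r : ℝ, 0 ≤ r → IsUnit (Matrix.diagonal a + G r))
    (s : ℝ → Fin n → ℂ) (hs : ∀ (r : ℝ) (i : Fin n), s r i = ((Real.sin (μ i * r) : ℝ) : ℂ))
    (v : ℝ → Fin n → ℂ) (hv : ∀ r : ℝ, v r = -((Matrix.diagonal a + G r)⁻¹ *ᵥ s r)) :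
    ∃ C > (0:ℝ), ∀ (j : Fin n), ∀ r : ℝ, 0 ≤ r → ‖v r j‖ ≤ C * (r / (1 + r ^ 2)) := by
  obtain ⟨K, hK, hGK⟩ := exists_abs_integral_sin_mul_sin_sub_le hμpos hμanti.injective
  have hclose : ∀ r i j, ‖(Matrix.diagonal a + G r) i j -
      if i = j then ((r / 2 : ℝ) : ℂ) else 0‖ ≤ ‖a‖ + K := by
    intro r i j
    rw [Matrix.add_apply, add_sub_assoc]
    refine (norm_add_le _ _).trans (add_le_add ?_ ?_)
    · rw [Matrix.diagonal_apply]
      split_ifs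
      · exact norm_le_pi_norm a i
      · simp
    · have hcast : G r i j - (if i = j then ((r / 2 : ℝ) : ℂ) else 0) =
          (((∫ ρ in (0:ℝ)..r, Real.sin (μ i * ρ) * Real.sin (μ j * ρ)) -
            if i = j then r / 2 else 0 : ℝ) : ℂ) := by
        rw [hG]
        split_ifs <;> push_cast <;> rfl
      rw [hcast, Complex.norm_real]
      exact hGK i j r
  set L : ℝ := n * (‖a‖ + K)
  have hL : 0 ≤ L := by positivity
  have hlarge : ∀ r, 1 + 4 * L ≤ r → ∀ j, ‖v r j‖ ≤ 8 * (r / (1 + r ^ 2)) := by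
    intro r hr j
    have hr0 : 0 < r := by linarith
    have hsol : (Matrix.diagonal a + G r) *ᵥ v r = -s r := by
      rw [hv, Matrix.mulVec_neg, Matrix.mulVec_mulVec, Matrix.mul_nonsing_inv _
        ((Matrix.isUnit_iff_isUnit_det _).1 (hinv r hr0.le)), Matrix.one_mulVec]
    have hsnorm : ‖s r‖ ≤ 1 := (pi_norm_le_iff_of_nonneg zero_le_one).2 fun i => by
      rw [hs, Complex.norm_real]
      exact Real.abs_sin_le_one _
    have hexp := mul_norm_le_of_norm_sub_smul_one_le (half_pos hr0).le (hclose r) (v r)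
    rw [hsol, norm_neg, Fintype.card_fin] at hexp
    have hquarter : r * ‖v r‖ ≤ 4 := by
      have := mul_le_mul_of_nonneg_right hr (norm_nonneg (v r))
      have := norm_nonneg (v r)
      change r / 2 * ‖v r‖ ≤ ‖s r‖ + L * ‖v r‖ at hexp
      linarith
    refine (norm_le_pi_norm (v r) j).trans ?_
    rw [← mul_div_assoc, le_div_iff₀ (by positivity)]
    nlinarith [mul_le_mul_of_nonneg_left hquarter hr0.le,
      mul_le_mul_of_nonneg_right (show 1 ≤ r by linarith) (norm_nonneg (v r))]
  have hGcont : Continuous fun r => Matrix.diagonal a + G r := by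
    refine continuous_const.add (continuous_matrix fun i j => ?_)
    simp only [hG]
    exact Complex.continuous_ofReal.comp (intervalIntegral.continuous_primitive
      (fun _ _ => Continuous.intervalIntegrable (by fun_prop) _ _) 0)
  have hinvcont : ContinuousOn (fun r => (Matrix.diagonal a + G r)⁻¹) (Set.Icc 0 (1 + 4 * L)) :=
    hGcont.continuousOn.matrix_inv fun r hr => hinv r hr.1
  have hbound : ∀ i j, ∃ B, ∀ r ∈ Set.Icc 0 (1 + 4 * L),
      ‖(Matrix.diagonal a + G r)⁻¹ i j‖ ≤ B := fun i j =>
    isCompact_Icc.exists_bound_of_continuousOn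
      ((continuous_id.matrix_elem i j).comp_continuousOn hinvcont)
  choose B hB using hbound
  have hBnonneg : ∀ i j, 0 ≤ B i j := fun i j =>
    (norm_nonneg _).trans (hB i j 0 ⟨le_rfl, by positivity⟩)
  have hterm : ∀ j i, 0 ≤ B j i * μ i := fun j i => mul_nonneg (hBnonneg j i) (hμpos i).le
  set D : ℝ := ∑ j, ∑ i, B j i * μ i
  have hD : 0 ≤ D := Finset.sum_nonneg fun j _ => Finset.sum_nonneg fun i _ => hterm j i
  have hsmall : ∀ r ∈ Set.Icc 0 (1 + 4 * L), ∀ j, ‖v r j‖ ≤ D * r := by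
    intro r hr j
    rw [hv, Pi.neg_apply, norm_neg]
    calc ‖((Matrix.diagonal a + G r)⁻¹ *ᵥ s r) j‖
        ≤ ∑ i, B j i * μ i * r := by
          rw [Matrix.mulVec, dotProduct]
          refine norm_sum_le_of_le _ fun i _ => ?_
          rw [norm_mul, mul_assoc, hs, Complex.norm_real]
          refine mul_le_mul (hB j i r hr) ?_ (norm_nonneg _) (hBnonneg j i)
          exact Real.abs_sin_le_abs.trans_eq (abs_of_nonneg (mul_nonneg (hμpos i).le hr.1))
      _ = (∑ i, B j i * μ i) * r := by rw [Finset.sum_mul]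
      _ ≤ D * r := mul_le_mul_of_nonneg_right
          (Finset.single_le_sum (f := fun j => ∑ i, B j i * μ i)
            (fun j _ => Finset.sum_nonneg fun i _ => hterm j i) (Finset.mem_univ j)) hr.1
  refine ⟨8 + D * (1 + (1 + 4 * L) ^ 2), by positivity, fun j r hr => ?_⟩
  have hq : 0 ≤ r / (1 + r ^ 2) := by positivity
  rcases le_total r (1 + 4 * L) with h | h
  · have hle : r ≤ (1 + (1 + 4 * L) ^ 2) * (r / (1 + r ^ 2)) := by
      rw [← mul_div_assoc, le_div_iff₀ (by positivity), mul_comm]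
      gcongr
    calc ‖v r j‖ ≤ D * r := hsmall r ⟨hr, h⟩ j
      _ ≤ D * ((1 + (1 + 4 * L) ^ 2) * (r / (1 + r ^ 2))) := by gcongr
      _ ≤ (8 + D * (1 + (1 + 4 * L) ^ 2)) * (r / (1 + r ^ 2)) := by linarith
  · refine (hlarge r h j).trans (mul_le_mul_of_nonneg_right ?_ hq)
    have : 0 ≤ D * (1 + (1 + 4 * L) ^ 2) := by positivity
    linarith
end

section
/- The potential V is bounded on (0, ∞): there exists a constant C > 0 such that |V(r)| ≤ C for all r > 0. -/
open Matrix MeasureTheory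

open Filter Topology Asymptotics

/-- The mean of `cos (c ρ)` over `[0, r]` tends to `0` when `c ≠ 0`. -/
theorem tendsto_inv_mul_integral_cos {c : ℝ} (hc : c ≠ 0) :
    Tendsto (fun r : ℝ => r⁻¹ * ∫ ρ in (0:ℝ)..r, Real.cos (c * ρ)) atTop (𝓝 0) := by
  refine tendsto_inv_atTop_zero.zero_mul_isBoundedUnder_le ?_
  refine isBoundedUnder_of ⟨|c⁻¹|, fun r => ?_⟩
  rw [Function.comp_apply, intervalIntegral.integral_comp_mul_left _ hc, integral_cos]
  simp only [smul_eq_mul, mul_zero, Real.sin_zero, sub_zero, Real.norm_eq_abs, abs_mul]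
  exact mul_le_of_le_one_right (abs_nonneg _) (Real.abs_sin_le_one _)

/-- The mean of `sin (a ρ) sin (b ρ)` over `[0, r]` tends to `1/2` if `a = b` and to `0` otherwise. -/
theorem tendsto_inv_mul_integral_sin_mul_sin {a b : ℝ} (ha : 0 < a) (hb : 0 < b) :
    Tendsto (fun r : ℝ => r⁻¹ * ∫ ρ in (0:ℝ)..r, Real.sin (a * ρ) * Real.sin (b * ρ)) atTop
      (𝓝 (if a = b then 1 / 2 else 0)) := by
  have hsplit : ∀ r : ℝ, r⁻¹ * ∫ ρ in (0:ℝ)..r, Real.sin (a * ρ) * Real.sin (b * ρ) =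
      1 / 2 * ((r⁻¹ * ∫ ρ in (0:ℝ)..r, Real.cos ((a - b) * ρ)) -
        r⁻¹ * ∫ ρ in (0:ℝ)..r, Real.cos ((a + b) * ρ)) := by
    intro r
    rw [← mul_sub, ← intervalIntegral.integral_sub
      (Continuous.intervalIntegrable (by fun_prop) _ _)
      (Continuous.intervalIntegrable (by fun_prop) _ _), mul_left_comm (1 / 2),
      ← intervalIntegral.integral_const_mul (1 / 2)]
    congr 2
    ext ρ
    rw [sub_mul, add_mul, Real.cos_sub, Real.cos_add]
    ring
  simp only [hsplit]
  have hsum := tendsto_inv_mul_integral_cos (add_pos ha hb).ne'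
  split_ifs with hab
  · have hone : Tendsto (fun r : ℝ => r⁻¹ * ∫ ρ in (0:ℝ)..r, Real.cos ((a - b) * ρ)) atTop
        (𝓝 1) := by
      refine tendsto_const_nhds.congr' ?_
      filter_upwards [eventually_gt_atTop 0] with r hr
      simp [hab, hr.ne']
    convert (hone.sub hsum).const_mul (1 / 2) using 2
    norm_num
  · convert ((tendsto_inv_mul_integral_cos (sub_ne_zero.2 hab)).sub hsum).const_mul (1 / 2) using 2
    norm_num

/-- A continuous family of invertible matrices growing linearly, with invertible leading
coefficient, has uniformly bounded inverse on `[0, ∞)`. -/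
theorem Matrix.isBigO_inv_of_tendsto_inv_smul {ι : Type*} [Fintype ι] [DecidableEq ι]
    {M : ℝ → Matrix ι ι ℂ} (hM : Continuous M) (hunit : ∀ r, 0 ≤ r → IsUnit (M r))
    {L : Matrix ι ι ℂ} (hL : IsUnit L)
    (hlim : Tendsto (fun r : ℝ => (r : ℂ)⁻¹ • M r) atTop (𝓝 L)) (i j : ι) :
    (fun r => (M r)⁻¹ i j) =O[𝓟 (Set.Ici 0)] (fun _ => (1 : ℝ)) := by
  have hinv : ∀ N : Matrix ι ι ℂ, IsUnit N → ContinuousAt (fun N : Matrix ι ι ℂ => N⁻¹ i j) N := by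
    intro N hN
    have hdet : N.det ≠ 0 := ((Matrix.isUnit_iff_isUnit_det _).1 hN).ne_zero
    simp only [Matrix.inv_def, Ring.inverse_eq_inv', Matrix.smul_apply, smul_eq_mul]
    refine ContinuousAt.mul (ContinuousAt.inv₀ ?_ hdet) ?_
    · exact (continuous_id.matrix_det).continuousAt
    · exact (continuous_id.matrix_adjugate.matrix_elem i j).continuousAt
  have hzero : Tendsto (fun r => (M r)⁻¹ i j) atTop (𝓝 0) := by
    have hr : Tendsto (fun r : ℝ => (r : ℂ)⁻¹) atTop (𝓝 0) :=
      tendsto_inv₀_cobounded.comp (RCLike.tendsto_ofReal_atTop_cobounded ℂ)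
    have hprod := hr.mul ((hinv L hL).tendsto.comp hlim)
    rw [zero_mul] at hprod
    refine hprod.congr' ?_
    filter_upwards [eventually_gt_atTop 0] with r hr
    have hr' : (r : ℂ) ≠ 0 := by exact_mod_cast hr.ne'
    have hdet := (Matrix.isUnit_iff_isUnit_det _).1 (hunit r hr.le)
    have hsmul : ((r : ℂ)⁻¹ • M r)⁻¹ = (r : ℂ) • (M r)⁻¹ := by
      apply Matrix.inv_eq_right_inv
      rw [Matrix.smul_mul, Matrix.mul_smul, Matrix.mul_nonsing_inv _ hdet, smul_smul,
        inv_mul_cancel₀ hr', one_smul]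
    simp [hsmul, hr']
  have hcont : ContinuousOn (fun r => (M r)⁻¹ i j) (Set.Ici 0) := fun r hr =>
    ((hinv _ (hunit r hr)).comp hM.continuousAt).continuousWithinAt
  obtain ⟨R, hR⟩ := eventually_atTop.1 (hzero.norm.eventually_le_const (u := 1) (by simp))
  obtain ⟨K, hK⟩ := (isCompact_Icc (a := (0:ℝ)) (b := R)).exists_bound_of_continuousOn
    (hcont.mono Set.Icc_subset_Ici_self)
  refine isBigO_principal.2 ⟨max K 1, fun r hr => ?_⟩
  rw [norm_one, mul_one]
  rcases le_total r R with h | h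
  · exact (hK r ⟨hr, h⟩).trans (le_max_left _ _)
  · exact (hR r h).trans (le_max_right _ _)

/-- Derivative of the entries of the inverse of a matrix-valued function. -/
theorem Matrix.hasDerivAt_inv_apply {ι : Type*} [Fintype ι] [DecidableEq ι]
    {M : ℝ → Matrix ι ι ℂ} {M' : Matrix ι ι ℂ} {r : ℝ} (hunit : IsUnit (M r))
    (hM : ∀ i j, HasDerivAt (fun t => M t i j) (M' i j) r) (i j : ι) :
    HasDerivAt (fun t => (M t)⁻¹ i j) (-((M r)⁻¹ * M' * (M r)⁻¹) i j) r := by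
  let _ : NormedRing (Matrix ι ι ℂ) := Matrix.linftyOpNormedRing
  let _ : NormedAlgebra ℝ (Matrix ι ι ℂ) := Matrix.linftyOpNormedAlgebra
  have hM' : HasDerivAt M M' r :=
    hasDerivAt_pi.2 fun i => hasDerivAt_pi.2 fun j => hM i j
  obtain ⟨u, hu⟩ := hunit
  have hF := hasFDerivAt_ringInverse (𝕜 := ℝ) u
  rw [hu] at hF
  have h := hF.comp_hasDerivAt r hM'
  have hentry := hasDerivAt_pi.1 (hasDerivAt_pi.1 h i) j
  have hval : (-((ContinuousLinearMap.mulLeftRight ℝ (Matrix ι ι ℂ)) ↑u⁻¹) ↑u⁻¹) M' i j =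
      -((M r)⁻¹ * M' * (M r)⁻¹) i j := by
    simp [← hu]
  rw [hval] at hentry
  have hinv : (fun t => (M t)⁻¹ i j) = fun t => (Ring.inverse ∘ M) t i j := by
    simp [Matrix.nonsing_inv_eq_ringInverse]
  rw [hinv]
  exact hentry

/-- the potential `V` is bounded on `(0,∞)`. -/
theorem stmt_10 (n : ℕ) (hn : 1 ≤ n) (μ : Fin n → ℝ)
    (hμpos : ∀ i, 0 < μ i) (hμanti : StrictAnti μ)
    (G : ℝ → Matrix (Fin n) (Fin n) ℂ)
    (hG : ∀ (r : ℝ) (i j : Fin n),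
      G r i j = ((∫ ρ in (0:ℝ)..r, Real.sin (μ i * ρ) * Real.sin (μ j * ρ) : ℝ) : ℂ))
    (a : Fin n → ℂ) (ha : ∀ j, a j ≠ 0 ∧ 0 ≤ (a j).re) (hinv : ∀ r : ℝ, 0 ≤ r → IsUnit (Matrix.diagonal a + G r))
    (s : ℝ → Fin n → ℂ) (hs : ∀ (r : ℝ) (i : Fin n), s r i = ((Real.sin (μ i * r) : ℝ) : ℂ))
    (v : ℝ → Fin n → ℂ) (hv : ∀ r : ℝ, v r = -((Matrix.diagonal a + G r)⁻¹ *ᵥ s r))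
    (V : ℝ → ℂ)
    (hV : ∀ r : ℝ, V r = 2 * deriv (fun t : ℝ => ∑ j, ((Real.sin (μ j * t) : ℝ) : ℂ) * v t j) r) :
    ∃ C > (0:ℝ), ∀ r : ℝ, 0 < r → ‖V r‖ ≤ C := by
  have hderivG : ∀ r i j, HasDerivAt (fun t => (Matrix.diagonal a + G t) i j)
      (vecMulVec (s r) (s r) i j) r := by
    intro r i j
    simp only [Matrix.add_apply, hG, vecMulVec_apply, hs, ← Complex.ofReal_mul]
    refine HasDerivAt.const_add _ (HasDerivAt.ofReal_comp ?_)
    have hc : Continuous fun ρ => Real.sin (μ i * ρ) * Real.sin (μ j * ρ) := by fun_prop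
    exact hc.deriv_integral _ 0 r ▸ (intervalIntegral.differentiable_integral_of_continuous hc
      |>.differentiableAt).hasDerivAt
  have hcont : Continuous fun r => Matrix.diagonal a + G r :=
    continuous_matrix fun i j => continuous_iff_continuousAt.2 fun r =>
      (hderivG r i j).continuousAt
  have hlim : Tendsto (fun r : ℝ => (r : ℂ)⁻¹ • (Matrix.diagonal a + G r)) atTop
      (𝓝 (Matrix.diagonal fun _ => (1 / 2 : ℂ))) := by
    refine tendsto_pi_nhds.2 fun i => tendsto_pi_nhds.2 fun j => ?_
    have hr : Tendsto (fun r : ℝ => (r : ℂ)⁻¹) atTop (𝓝 0) :=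
      tendsto_inv₀_cobounded.comp (RCLike.tendsto_ofReal_atTop_cobounded ℂ)
    have hmean := (Complex.continuous_ofReal.tendsto _).comp
      (tendsto_inv_mul_integral_sin_mul_sin (hμpos i) (hμpos j))
    have hsum := (hr.mul_const (Matrix.diagonal a i j)).add hmean
    convert hsum using 2 with r
    · simp [hG, mul_add]
    · rw [Matrix.diagonal_apply]
      by_cases hij : i = j
      · simp [hij]
      · simp [hij, hμanti.injective.ne hij]
  have hunit : IsUnit (Matrix.diagonal fun _ : Fin n => (1 / 2 : ℂ)) := by
    rw [Matrix.isUnit_iff_isUnit_det, Matrix.det_diagonal]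
    simp
  set F : ℝ → Matrix (Fin n) (Fin n) ℂ := fun r => (Matrix.diagonal a + G r)⁻¹ with hF
  have hFbdd : ∀ i j, (fun r => F r i j) =O[𝓟 (Set.Ici 0)] (fun _ => (1 : ℝ)) :=
    Matrix.isBigO_inv_of_tendsto_inv_smul hcont hinv hunit hlim
  have hsbdd : ∀ i, (fun r => s r i) =O[𝓟 (Set.Ici 0)] (fun _ => (1 : ℝ)) := by
    refine fun i => isBigO_principal.2 ⟨1, fun r _ => ?_⟩
    rw [hs, Complex.norm_real, norm_one, mul_one]
    exact Real.abs_sin_le_one _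
  let s' : ℝ → Fin n → ℂ := fun r i => ((Real.cos (μ i * r) * μ i : ℝ) : ℂ)
  have hs'bdd : ∀ i, (fun r => s' r i) =O[𝓟 (Set.Ici 0)] (fun _ => (1 : ℝ)) := by
    refine fun i => isBigO_principal.2 ⟨|μ i|, fun r _ => ?_⟩
    rw [Complex.norm_real, norm_one, mul_one, norm_mul]
    exact mul_le_of_le_one_left (abs_nonneg _) (Real.abs_cos_le_one _)
  have hsderiv : ∀ r i, HasDerivAt (fun t => s t i) (s' r i) r := by
    intro r i
    simp only [hs]
    refine HasDerivAt.ofReal_comp ?_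
    simpa using ((hasDerivAt_id r).const_mul (μ i)).sin
  have hf : (fun t : ℝ => ∑ j, ((Real.sin (μ j * t) : ℝ) : ℂ) * v t j) =
      fun t => -∑ j, ∑ k, s t j * F t j k * s t k := by
    ext t
    simp [hv, hF, ← hs, Matrix.mulVec, dotProduct, Finset.mul_sum, mul_assoc]
  have hderiv : ∀ r : ℝ, 0 ≤ r →
      HasDerivAt (fun t : ℝ => ∑ j, ((Real.sin (μ j * t) : ℝ) : ℂ) * v t j)
        (-∑ j, ∑ k, ((s' r j * F r j k + s r j * -(F r * vecMulVec (s r) (s r) * F r) j k) * s r k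
          + s r j * F r j k * s' r k)) r := by
    intro r hr
    rw [hf]
    exact (HasDerivAt.fun_sum fun j _ => HasDerivAt.fun_sum fun k _ =>
      ((hsderiv r j).mul (Matrix.hasDerivAt_inv_apply (hinv r hr) (hderivG r) j k)).mul
        (hsderiv r k)).neg
  have hmul : ∀ {f g : ℝ → ℂ}, f =O[𝓟 (Set.Ici 0)] (fun _ => (1 : ℝ)) →
      g =O[𝓟 (Set.Ici 0)] (fun _ => (1 : ℝ)) →
      (fun r => f r * g r) =O[𝓟 (Set.Ici 0)] (fun _ => (1 : ℝ)) := by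
    intro f g h₁ h₂
    simpa using h₁.mul h₂
  have hprod : ∀ j k, (fun r => (F r * vecMulVec (s r) (s r) * F r) j k)
      =O[𝓟 (Set.Ici 0)] (fun _ => (1 : ℝ)) := by
    intro j k
    simp only [Matrix.mul_apply, vecMulVec_apply]
    exact IsBigO.fun_sum fun l _ => hmul
      (IsBigO.fun_sum fun m _ => hmul (hFbdd j m) (hmul (hsbdd m) (hsbdd l))) (hFbdd l k)
  have hbdd : (fun r => -∑ j, ∑ k,
      ((s' r j * F r j k + s r j * -(F r * vecMulVec (s r) (s r) * F r) j k) * s r k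
          + s r j * F r j k * s' r k)) =O[𝓟 (Set.Ici 0)] (fun _ => (1 : ℝ)) :=
    (IsBigO.fun_sum fun j _ => IsBigO.fun_sum fun k _ =>
      (hmul ((hmul (hs'bdd j) (hFbdd j k)).add (hmul (hsbdd j) (hprod j k).neg_left))
        (hsbdd k)).add (hmul (hmul (hsbdd j) (hFbdd j k)) (hs'bdd k))).neg_left
  obtain ⟨C, hC⟩ := isBigO_principal.1 hbdd
  refine ⟨2 * |C| + 1, by positivity, fun r hr => ?_⟩
  have hCr := hC r hr.le
  rw [norm_one, mul_one] at hCr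
  rw [hV, (hderiv r hr.le).deriv, norm_mul, Complex.norm_ofNat]
  linarith [le_abs_self C]
end

section
/- For every j ∈ {1, …, n}: v_j(0) = 0, v_j is twice continuously differentiable on (0, ∞), and the eigenvalue equation −v_j″(r) + V(r) v_j(r) = μ_j² v_j(r) holds for every r > 0. -/
open Matrix MeasureTheory

section SmoothMatrix

variable {n : ℕ} {k : WithTop ℕ∞}

theorem contDiffAt_det {M : ℝ → Matrix (Fin n) (Fin n) ℂ} {r : ℝ}
    (hM : ∀ i j, ContDiffAt ℝ k (fun t => M t i j) r) :
    ContDiffAt ℝ k (fun t => (M t).det) r := by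
  simp only [Matrix.det_apply']
  exact ContDiffAt.sum fun σ _ => contDiffAt_const.mul (contDiffAt_prod fun i _ => hM _ _)

theorem contDiffAt_adjugate_apply {M : ℝ → Matrix (Fin n) (Fin n) ℂ} {r : ℝ}
    (hM : ∀ i j, ContDiffAt ℝ k (fun t => M t i j) r) (i j : Fin n) :
    ContDiffAt ℝ k (fun t => (M t).adjugate i j) r := by
  simp only [Matrix.adjugate_apply]
  refine contDiffAt_det fun p q => ?_
  by_cases hp : p = j
  · subst hp
    simpa using contDiffAt_const
  · simpa [Matrix.updateRow_ne hp] using hM p q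

theorem contDiffAt_inv_mulVec_apply {M : ℝ → Matrix (Fin n) (Fin n) ℂ} {u : ℝ → Fin n → ℂ}
    {r : ℝ} (hM : ∀ i j, ContDiffAt ℝ k (fun t => M t i j) r)
    (hu : ∀ i, ContDiffAt ℝ k (fun t => u t i) r) (hr : IsUnit (M r)) (j : Fin n) :
    ContDiffAt ℝ k (fun t => ((M t)⁻¹ *ᵥ u t) j) r := by
  have hdet : (M r).det ≠ 0 := ((Matrix.isUnit_iff_isUnit_det _).1 hr).ne_zero
  simp only [Matrix.mulVec, dotProduct, Matrix.inv_def, Matrix.smul_apply, smul_eq_mul,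
    Ring.inverse_eq_inv']
  exact ContDiffAt.sum fun i _ =>
    (((contDiffAt_det hM).inv hdet).mul (contDiffAt_adjugate_apply hM j i)).mul (hu i)

end SmoothMatrix

section SineGram

theorem hasDerivAt_ofReal_sin_mul (a r : ℝ) :
    HasDerivAt (fun t : ℝ => ((Real.sin (a * t) : ℝ) : ℂ)) ((a * Real.cos (a * r) : ℝ) : ℂ) r := by
  have h := ((hasDerivAt_id r).const_mul a).sin.ofReal_comp
  simpa [mul_comm] using h

theorem hasDerivAt_ofReal_mul_cos_mul (a r : ℝ) :
    HasDerivAt (fun t : ℝ => ((a * Real.cos (a * t) : ℝ) : ℂ))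
      (-(a : ℂ) ^ 2 * ((Real.sin (a * r) : ℝ) : ℂ)) r := by
  have h := (((hasDerivAt_id r).const_mul a).cos.const_mul a).ofReal_comp
  refine h.congr_deriv ?_
  simp only [id]
  push_cast
  ring

theorem contDiff_ofReal_sin_mul (a : ℝ) {k : WithTop ℕ∞} :
    ContDiff ℝ k (fun t : ℝ => ((Real.sin (a * t) : ℝ) : ℂ)) :=
  Complex.ofRealCLM.contDiff.comp (Real.contDiff_sin.comp (contDiff_const.mul contDiff_id))

theorem hasDerivAt_integral_sin_mul_sin (a b r : ℝ) :
    HasDerivAt (fun t : ℝ => ∫ ρ in (0:ℝ)..t, Real.sin (a * ρ) * Real.sin (b * ρ))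
      (Real.sin (a * r) * Real.sin (b * r)) r :=
  intervalIntegral.integral_hasDerivAt_right
    (Continuous.intervalIntegrable (by fun_prop) _ _)
    (Continuous.stronglyMeasurableAtFilter (by fun_prop) _ _)
    (Continuous.continuousAt (by fun_prop))

theorem contDiff_integral_sin_mul_sin (a b : ℝ) :
    ContDiff ℝ 2 (fun t : ℝ =>
      ((∫ ρ in (0:ℝ)..t, Real.sin (a * ρ) * Real.sin (b * ρ) : ℝ) : ℂ)) := by
  suffices h : ContDiff ℝ 2 (fun t : ℝ =>
      ∫ ρ in (0:ℝ)..t, Real.sin (a * ρ) * Real.sin (b * ρ)) from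
    Complex.ofRealCLM.contDiff.comp h
  rw [show (2 : WithTop ℕ∞) = 1 + 1 by norm_num, contDiff_succ_iff_deriv]
  refine ⟨fun r => (hasDerivAt_integral_sin_mul_sin a b r).differentiableAt, by simp, ?_⟩
  rw [funext fun r => (hasDerivAt_integral_sin_mul_sin a b r).deriv]
  exact (Real.contDiff_sin.comp (contDiff_const.mul contDiff_id)).mul
    (Real.contDiff_sin.comp (contDiff_const.mul contDiff_id))

/-- The Wronskian identity for `sin (a ρ)` and `sin (b ρ)`. -/
theorem sq_sub_sq_mul_integral_sin_mul_sin (a b r : ℝ) :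
    (a ^ 2 - b ^ 2) * ∫ ρ in (0:ℝ)..r, Real.sin (a * ρ) * Real.sin (b * ρ) =
      Real.sin (a * r) * (b * Real.cos (b * r)) - a * Real.cos (a * r) * Real.sin (b * r) := by
  rw [← intervalIntegral.integral_const_mul]
  rw [intervalIntegral.integral_eq_sub_of_hasDerivAt (f := fun t =>
    Real.sin (a * t) * (b * Real.cos (b * t)) - a * Real.cos (a * t) * Real.sin (b * t))]
  · simp
  · intro x _
    have ha := (hasDerivAt_id x).const_mul a
    have hb := (hasDerivAt_id x).const_mul b
    refine ((ha.sin.mul (hb.cos.const_mul b)).sub ((ha.cos.const_mul a).mul hb.sin)).congr_deriv ?_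
    simp only [id]
    ring
  · exact Continuous.intervalIntegrable (by fun_prop) _ _

end SineGram

/-- The linear algebra behind the eigenvalue equation: `M v = -s` together with its first two
derivatives, where `M' = s sᵀ` and `[D², M] = s s'ᵀ - s' sᵀ`, forces `v'' = 2 (s ⬝ v)' v - D² v`. -/
theorem eq_of_gram_differentiated_twice {n : ℕ} {M : Matrix (Fin n) (Fin n) ℂ} (hM : IsUnit M)
    {d s s' v v' v'' : Fin n → ℂ}
    (hcomm : ∀ i j, (d i ^ 2 - d j ^ 2) * M i j = s i * s' j - s' i * s j)
    (hMv : ∀ i, ∑ j, M i j * v j = -s i)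
    (hMv'' : ∀ i, ∑ j, ((s' i * s j + s i * s' j) * v j + s i * s j * v' j +
      (s i * s j * v' j + M i j * v'' j)) = d i ^ 2 * s i) (j : Fin n) :
    -v'' j + 2 * (∑ i, (s' i * v i + s i * v' i)) * v j = d j ^ 2 * v j := by
  set W : ℂ := 2 * ∑ i, (s' i * v i + s i * v' i) with hW
  have hzero : M *ᵥ (fun j => v'' j - W * v j + d j ^ 2 * v j) = 0 := by
    funext i
    have hWs : W * s i = ∑ j, 2 * s i * (s' j * v j + s j * v' j) := by
      rw [hW, ← Finset.mul_sum]; ring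
    calc ∑ j, M i j * (v'' j - W * v j + d j ^ 2 * v j)
        = ∑ j, ((s' i * s j + s i * s' j) * v j + s i * s j * v' j +
            (s i * s j * v' j + M i j * v'' j)) + (d i ^ 2 - W) * ∑ j, M i j * v j
            - ∑ j, 2 * s i * (s' j * v j + s j * v' j) := by
          rw [Finset.mul_sum, ← Finset.sum_add_distrib, ← Finset.sum_sub_distrib]
          refine Finset.sum_congr rfl fun j _ => ?_
          linear_combination (-v j) * hcomm i j
      _ = 0 := by
          rw [hMv'', hMv, ← hWs]; ring
  have hinj := Matrix.mulVec_injective_iff_isUnit.2 hM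
  have hj := congrFun (hinj (hzero.trans (Matrix.mulVec_zero M).symm)) j
  simp only [Pi.zero_apply] at hj
  linear_combination -hj

/-- `v_j(0) = 0`, regularity, and the eigenvalue equation
`-v_j'' + V v_j = μ_j² v_j` on `(0,∞)`. -/
theorem stmt_12 (n : ℕ) (hn : 1 ≤ n) (μ : Fin n → ℝ)
    (hμpos : ∀ i, 0 < μ i) (hμanti : StrictAnti μ)
    (G : ℝ → Matrix (Fin n) (Fin n) ℂ)
    (hG : ∀ (r : ℝ) (i j : Fin n),
      G r i j = ((∫ ρ in (0:ℝ)..r, Real.sin (μ i * ρ) * Real.sin (μ j * ρ) : ℝ) : ℂ))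
    (a : Fin n → ℂ) (ha : ∀ j, a j ≠ 0 ∧ 0 ≤ (a j).re) (hinv : ∀ r : ℝ, 0 ≤ r → IsUnit (Matrix.diagonal a + G r))
    (s : ℝ → Fin n → ℂ) (hs : ∀ (r : ℝ) (i : Fin n), s r i = ((Real.sin (μ i * r) : ℝ) : ℂ))
    (v : ℝ → Fin n → ℂ) (hv : ∀ r : ℝ, v r = -((Matrix.diagonal a + G r)⁻¹ *ᵥ s r))
    (V : ℝ → ℂ)
    (hV : ∀ r : ℝ, V r = 2 * deriv (fun t : ℝ => ∑ j, ((Real.sin (μ j * t) : ℝ) : ℂ) * v t j) r) :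
    ∀ j : Fin n,
      v 0 j = 0
      ∧ ContDiffOn ℝ 2 (fun r : ℝ => v r j) (Set.Ioi (0:ℝ))
      ∧ ∀ r : ℝ, 0 < r →
          -deriv (deriv (fun t : ℝ => v t j)) r + V r * v r j = ((μ j : ℂ)) ^ 2 * v r j := by
  set M : ℝ → Matrix (Fin n) (Fin n) ℂ := fun r => Matrix.diagonal a + G r with hMdef
  have hM_apply : ∀ i j r, M r i j = Matrix.diagonal a i j +
      ((∫ ρ in (0:ℝ)..r, Real.sin (μ i * ρ) * Real.sin (μ j * ρ) : ℝ) : ℂ) := fun i j r => by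
    simp only [hMdef, Matrix.add_apply, hG]
  set c : ℝ → Fin n → ℂ := fun r i => ((μ i * Real.cos (μ i * r) : ℝ) : ℂ) with hc
  have hs_deriv : ∀ i r, HasDerivAt (fun t => s t i) (c r i) r := fun i r => by
    simpa only [hs] using hasDerivAt_ofReal_sin_mul (μ i) r
  have hc_deriv : ∀ i r, HasDerivAt (fun t => c t i) (-(μ i : ℂ) ^ 2 * s r i) r := fun i r => by
    simpa only [hs] using hasDerivAt_ofReal_mul_cos_mul (μ i) r
  have hM_deriv : ∀ i j r, HasDerivAt (fun t => M t i j) (s r i * s r j) r := fun i j r => by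
    simp only [hM_apply, hs, ← Complex.ofReal_mul]
    exact (hasDerivAt_integral_sin_mul_sin (μ i) (μ j) r).ofReal_comp.const_add _
  have hv_smooth : ∀ j r, 0 < r → ContDiffAt ℝ 2 (fun t => v t j) r := fun j r hr => by
    simp only [hv, Pi.neg_apply]
    refine (contDiffAt_inv_mulVec_apply (fun p q => ?_) (fun p => ?_) (hinv r hr.le) j).neg
    · change ContDiffAt ℝ 2 (fun t => M t p q) r
      simp only [hM_apply]
      exact contDiffAt_const.add (contDiff_integral_sin_mul_sin _ _).contDiffAt
    · simp only [hs]
      exact (contDiff_ofReal_sin_mul _).contDiffAt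
  have hv_on : ∀ j, ContDiffOn ℝ 2 (fun t => v t j) (Set.Ioi 0) := fun j r hr =>
    (hv_smooth j r hr).contDiffWithinAt
  have hv_deriv : ∀ j r, 0 < r → HasDerivAt (fun t => v t j) (deriv (fun t => v t j) r) r :=
    fun j r hr => ((hv_smooth j r hr).differentiableAt (by norm_num)).hasDerivAt
  have hv_deriv2 : ∀ j r, 0 < r → HasDerivAt (deriv fun t => v t j)
      (deriv (deriv fun t => v t j) r) r := fun j r hr => by
    have h : ContDiffOn ℝ 1 (deriv fun t => v t j) (Set.Ioi 0) :=
      (hv_on j).deriv_of_isOpen isOpen_Ioi (by norm_num)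
    exact ((h.differentiableOn (by norm_num)).differentiableAt (Ioi_mem_nhds hr)).hasDerivAt
  have hMv : ∀ r, 0 < r → ∀ i, ∑ j, M r i j * v r j = -s r i := fun r hr i => by
    have hdet := (Matrix.isUnit_iff_isUnit_det _).1 (hinv r hr.le)
    have h : M r *ᵥ v r = -s r := by
      rw [hv, Matrix.mulVec_neg, Matrix.mulVec_mulVec, Matrix.mul_nonsing_inv _ hdet,
        Matrix.one_mulVec]
    exact congrFun h i
  have hMv' : ∀ r, 0 < r → ∀ i,
      ∑ j, (s r i * s r j * v r j + M r i j * deriv (fun t => v t j) r) = -c r i :=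
    fun r hr i => by
      have h := HasDerivAt.fun_sum (u := Finset.univ) fun j _ =>
        (hM_deriv i j r).mul (hv_deriv j r hr)
      refine h.unique ((hs_deriv i r).neg.congr_of_eventuallyEq ?_)
      filter_upwards [Ioi_mem_nhds hr] with t ht using hMv t ht i
  have hMv'' : ∀ r, 0 < r → ∀ i,
      ∑ j, ((c r i * s r j + s r i * c r j) * v r j + s r i * s r j * deriv (fun t => v t j) r +
        (s r i * s r j * deriv (fun t => v t j) r + M r i j * deriv (deriv fun t => v t j) r)) =
      (μ i : ℂ) ^ 2 * s r i :=
    fun r hr i => by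
      have h := HasDerivAt.fun_sum (u := Finset.univ) fun j _ =>
        ((((hs_deriv i r).mul (hs_deriv j r)).mul (hv_deriv j r hr)).add
          ((hM_deriv i j r).mul (hv_deriv2 j r hr)))
      refine (h.unique ((hc_deriv i r).neg.congr_of_eventuallyEq ?_)).trans (by ring)
      filter_upwards [Ioi_mem_nhds hr] with t ht using hMv' t ht i
  intro j
  refine ⟨?_, hv_on j, fun r hr => ?_⟩
  · have hs0 : s 0 = 0 := funext fun i => by simp [hs]
    simp [hv, hs0]
  · have hVr : V r = 2 * ∑ i, (c r i * v r i + s r i * deriv (fun t => v t i) r) := by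
      rw [hV]
      simp only [← hs]
      rw [(HasDerivAt.fun_sum (u := Finset.univ) fun i _ =>
        (hs_deriv i r).fun_mul (hv_deriv i r hr)).deriv]
    rw [hVr]
    refine eq_of_gram_differentiated_twice (d := fun i => (μ i : ℂ)) (hinv r hr.le) (fun p q => ?_)
      (hMv r hr) (hMv'' r hr) j
    have hdiag : ((μ p : ℂ) ^ 2 - (μ q : ℂ) ^ 2) * Matrix.diagonal a p q = 0 := by
      by_cases hpq : p = q
      · simp [hpq]
      · simp [hpq]
    have hw := congrArg Complex.ofReal (sq_sub_sq_mul_integral_sin_mul_sin (μ p) (μ q) r)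
    change ((μ p : ℂ) ^ 2 - (μ q : ℂ) ^ 2) * M r p q = _
    rw [hM_apply, mul_add, hdiag, zero_add, hs, hs]
    simp only [hc]
    exact_mod_cast hw
end

section
/- There exist constants C > 0 and r₀ > 0 such that for all r ≥ r₀ one has ‖v(r) + (2/r)s(r) − (4/r²)(A + H(r))s(r)‖ ≤ C r⁻³, where ‖·‖ is the norm on ℂⁿ. -/
open Matrix MeasureTheory

/-- `∫₀^r cos(c ρ) dρ = sin(c r) / c` for `c ≠ 0`. -/
lemma integral_cos_const_mul {c : ℝ} (hc : c ≠ 0) (r : ℝ) :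
    ∫ ρ in (0:ℝ)..r, Real.cos (c * ρ) = Real.sin (c * r) / c := by
  rw [intervalIntegral.integral_comp_mul_left (fun x => Real.cos x) hc, integral_cos]
  simp [div_eq_inv_mul]

lemma integral_sin_mul_sin_const_mul_of_ne {x y : ℝ} (hsub : x - y ≠ 0) (hadd : x + y ≠ 0)
    (r : ℝ) :
    ∫ ρ in (0:ℝ)..r, Real.sin (x * ρ) * Real.sin (y * ρ) =
      Real.sin ((x - y) * r) / (2 * (x - y)) - Real.sin ((x + y) * r) / (2 * (x + y)) := by
  have h : ∀ ρ : ℝ, Real.sin (x * ρ) * Real.sin (y * ρ) =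
      (1 / 2) * (Real.cos ((x - y) * ρ) - Real.cos ((x + y) * ρ)) := fun ρ => by
    rw [sub_mul, add_mul, Real.cos_sub, Real.cos_add]; ring
  simp_rw [h]
  rw [intervalIntegral.integral_const_mul, intervalIntegral.integral_sub,
    integral_cos_const_mul hsub, integral_cos_const_mul hadd]
  · field_simp
  all_goals exact Continuous.intervalIntegrable (by fun_prop) _ _

lemma integral_sin_const_mul_mul_self {x : ℝ} (hx : x ≠ 0) (r : ℝ) :
    ∫ ρ in (0:ℝ)..r, Real.sin (x * ρ) * Real.sin (x * ρ) =
      r / 2 + -Real.sin (2 * x * r) / (4 * x) := by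
  have h : ∀ ρ : ℝ, Real.sin (x * ρ) * Real.sin (x * ρ) =
      (1 / 2) * (1 - Real.cos ((2 * x) * ρ)) := fun ρ => by
    rw [mul_assoc 2 x ρ, Real.cos_two_mul, Real.cos_sq']; ring
  simp_rw [h]
  rw [intervalIntegral.integral_const_mul, intervalIntegral.integral_sub,
    integral_cos_const_mul (by simpa using hx)]
  · simp only [intervalIntegral.integral_const, sub_zero, smul_eq_mul, mul_one]
    field_simp
    ring
  all_goals exact Continuous.intervalIntegrable (by fun_prop) _ _

lemma abs_sin_div_le (x c : ℝ) : |Real.sin x / c| ≤ 1 / |c| := by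
  rw [abs_div]
  gcongr
  exact Real.abs_sin_le_one x

/-- A family of matrices with entrywise uniform bounds acts uniformly boundedly. -/
lemma exists_norm_mulVec_le_of_entrywise {α ι : Type*} [Fintype ι] (B : α → Matrix ι ι ℂ)
    (K : ι → ι → ℝ) (hK : ∀ r i j, ‖B r i j‖ ≤ K i j) :
    ∃ c > (0:ℝ), ∀ r (x : ι → ℂ), ‖B r *ᵥ x‖ ≤ c * ‖x‖ := by
  have hpos : 0 ≤ ∑ i, ∑ j, |K i j| :=
    Finset.sum_nonneg fun _ _ => Finset.sum_nonneg fun _ _ => abs_nonneg _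
  refine ⟨∑ i, ∑ j, |K i j| + 1, by linarith, fun r x => ?_⟩
  refine (pi_norm_le_iff_of_nonneg (by positivity)).2 fun i => ?_
  calc ‖(B r *ᵥ x) i‖ ≤ ∑ j, ‖B r i j * x j‖ := norm_sum_le _ _
    _ ≤ ∑ j, |K i j| * ‖x‖ := by
        refine Finset.sum_le_sum fun j _ => ?_
        rw [norm_mul]
        exact mul_le_mul ((hK r i j).trans (le_abs_self _)) (norm_le_pi_norm x j)
          (norm_nonneg _) (abs_nonneg _)
    _ = (∑ j, |K i j|) * ‖x‖ := (Finset.sum_mul _ _ _).symm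
    _ ≤ (∑ i, ∑ j, |K i j| + 1) * ‖x‖ := by
        gcongr
        have := Finset.single_le_sum (f := fun i => ∑ j, |K i j|)
          (fun _ _ => Finset.sum_nonneg fun _ _ => abs_nonneg _) (Finset.mem_univ i)
        linarith

/-- Remainder of the second-order Neumann expansion of a solution `y` of `(t + B) y = s`. -/
lemma norm_neumann_remainder_le {ι : Type*} [Fintype ι] (B : Matrix ι ι ℂ) {c t : ℝ}
    (hc : 0 < c) (ht : 2 * c ≤ t) (hB : ∀ x : ι → ℂ, ‖B *ᵥ x‖ ≤ c * ‖x‖) (s y : ι → ℂ)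
    (hy : (t : ℂ) • y + B *ᵥ y = s) :
    ‖-y + (t : ℂ)⁻¹ • s - ((t : ℂ) ^ 2)⁻¹ • (B *ᵥ s)‖ ≤ 2 * c ^ 2 * ‖s‖ / t ^ 3 := by
  set e := -y + (t : ℂ)⁻¹ • s - ((t : ℂ) ^ 2)⁻¹ • (B *ᵥ s) with he
  have ht0 : 0 < t := by linarith
  have htc : (t : ℂ) ≠ 0 := by exact_mod_cast ht0.ne'
  have hBy : B *ᵥ y = s - (t : ℂ) • y := by rw [← hy]; abel
  have key : (t : ℂ) • e = -(((t : ℂ) ^ 2)⁻¹ • (B *ᵥ (B *ᵥ s))) - B *ᵥ e := by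
    rw [he, mulVec_sub, mulVec_add, mulVec_neg, mulVec_smul, mulVec_smul, hBy]
    ext i
    simp only [Pi.smul_apply, Pi.sub_apply, Pi.add_apply, Pi.neg_apply, smul_eq_mul]
    field_simp
    ring
  have hBB : ‖B *ᵥ (B *ᵥ s)‖ ≤ c ^ 2 * ‖s‖ :=
    (hB _).trans (by nlinarith [hB s])
  have hle : t * ‖e‖ ≤ (t ^ 2)⁻¹ * (c ^ 2 * ‖s‖) + c * ‖e‖ := by
    calc t * ‖e‖ = ‖(t : ℂ) • e‖ := by rw [norm_smul, Complex.norm_of_nonneg ht0.le]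
      _ ≤ ‖((t : ℂ) ^ 2)⁻¹ • (B *ᵥ (B *ᵥ s))‖ + ‖B *ᵥ e‖ := by
          rw [key]; exact (norm_sub_le _ _).trans_eq (by rw [norm_neg])
      _ ≤ _ := by
          rw [norm_smul, norm_inv, norm_pow, Complex.norm_of_nonneg ht0.le]
          gcongr
          exact hB e
  have hhalf : t * ‖e‖ ≤ 2 * ((t ^ 2)⁻¹ * (c ^ 2 * ‖s‖)) := by
    nlinarith [norm_nonneg e]
  rw [le_div_iff₀ (by positivity)]
  calc ‖e‖ * t ^ 3 = t * ‖e‖ * t ^ 2 := by ring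
    _ ≤ 2 * ((t ^ 2)⁻¹ * (c ^ 2 * ‖s‖)) * t ^ 2 := by gcongr
    _ = 2 * c ^ 2 * ‖s‖ := by field_simp

/-- second-order asymptotic expansion of `v(r)` as `r → ∞`. -/
theorem stmt_15 (n : ℕ) (hn : 1 ≤ n) (μ : Fin n → ℝ)
    (hμpos : ∀ i, 0 < μ i) (hμanti : StrictAnti μ)
    (G : ℝ → Matrix (Fin n) (Fin n) ℂ)
    (hG : ∀ (r : ℝ) (i j : Fin n),
      G r i j = ((∫ ρ in (0:ℝ)..r, Real.sin (μ i * ρ) * Real.sin (μ j * ρ) : ℝ) : ℂ))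
    (H : ℝ → Matrix (Fin n) (Fin n) ℂ)
    (hH : ∀ (r : ℝ) (i j : Fin n), H r i j =
      ((if i = j then -Real.sin (2 * μ i * r) / (4 * μ i)
        else Real.sin ((μ i - μ j) * r) / (2 * (μ i - μ j))
          - Real.sin ((μ i + μ j) * r) / (2 * (μ i + μ j)) : ℝ) : ℂ))
    (a : Fin n → ℂ) (ha : ∀ j, a j ≠ 0 ∧ 0 ≤ (a j).re) (hinv : ∀ r : ℝ, 0 ≤ r → IsUnit (Matrix.diagonal a + G r))
    (s : ℝ → Fin n → ℂ) (hs : ∀ (r : ℝ) (i : Fin n), s r i = ((Real.sin (μ i * r) : ℝ) : ℂ))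
    (v : ℝ → Fin n → ℂ) (hv : ∀ r : ℝ, v r = -((Matrix.diagonal a + G r)⁻¹ *ᵥ s r)) :
    ∃ C > (0:ℝ), ∃ r₀ > (0:ℝ), ∀ r : ℝ, r₀ ≤ r →
      ‖(WithLp.equiv 2 (Fin n → ℂ)).symm
          (v r + ((2 / r : ℝ) : ℂ) • s r
            - ((4 / r ^ 2 : ℝ) : ℂ) • ((Matrix.diagonal a + H r) *ᵥ s r))‖ ≤ C / r ^ 3 := by
  obtain ⟨c, hc, hB⟩ := exists_norm_mulVec_le_of_entrywise
    (fun r => Matrix.diagonal a + H r)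
    (fun i j => ‖Matrix.diagonal a i j‖ + (1 / |4 * μ i| +
      (1 / |2 * (μ i - μ j)| + 1 / |2 * (μ i + μ j)|))) (by
    intro r i j
    rw [Matrix.add_apply]
    refine (norm_add_le _ _).trans (add_le_add le_rfl ?_)
    rw [hH, Complex.norm_real, Real.norm_eq_abs]
    split_ifs
    · rw [neg_div, abs_neg]
      exact (abs_sin_div_le _ _).trans (le_add_of_nonneg_right (by positivity))
    · refine (abs_sub _ _).trans ((add_le_add (abs_sin_div_le _ _) (abs_sin_div_le _ _)).trans ?_)
      exact le_add_of_nonneg_left (by positivity))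
  have hGH : ∀ r : ℝ, Matrix.diagonal a + G r =
      ((r / 2 : ℝ) : ℂ) • (1 : Matrix (Fin n) (Fin n) ℂ) + (Matrix.diagonal a + H r) := by
    intro r
    have : G r = ((r / 2 : ℝ) : ℂ) • (1 : Matrix (Fin n) (Fin n) ℂ) + H r := by
      ext i j
      rw [hG, Matrix.add_apply, hH]
      by_cases hij : i = j
      · subst hij
        rw [integral_sin_const_mul_mul_self (hμpos i).ne']
        simp
      · rw [integral_sin_mul_sin_const_mul_of_ne (sub_ne_zero.2 (hμanti.injective.ne hij))
          (add_pos (hμpos i) (hμpos j)).ne']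
        simp [hij]
    rw [this]
    abel
  let L : (Fin n → ℂ) →L[ℂ] EuclideanSpace ℂ (Fin n) :=
    (PiLp.continuousLinearEquiv 2 ℂ (fun _ : Fin n => ℂ)).symm
  refine ⟨(‖L‖ + 1) * (16 * c ^ 2), by positivity, 4 * c, by positivity, fun r hr => ?_⟩
  have hr0 : 0 < r := by linarith
  have hs1 : ‖s r‖ ≤ 1 := (pi_norm_le_iff_of_nonneg zero_le_one).2 fun i => by
    rw [hs, Complex.norm_real, Real.norm_eq_abs]
    exact Real.abs_sin_le_one _
  have hsol : ((r / 2 : ℝ) : ℂ) • ((Matrix.diagonal a + G r)⁻¹ *ᵥ s r) +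
      (Matrix.diagonal a + H r) *ᵥ ((Matrix.diagonal a + G r)⁻¹ *ᵥ s r) = s r := by
    have h : (Matrix.diagonal a + G r) *ᵥ ((Matrix.diagonal a + G r)⁻¹ *ᵥ s r) = s r := by
      rw [mulVec_mulVec, Matrix.mul_nonsing_inv _
        ((Matrix.isUnit_iff_isUnit_det _).1 (hinv r hr0.le)), one_mulVec]
    conv at h => lhs; arg 1; rw [hGH r]
    rwa [add_mulVec, smul_mulVec, one_mulVec] at h
  have hrem := norm_neumann_remainder_le (Matrix.diagonal a + H r) hc
    (by linarith : 2 * c ≤ r / 2) (hB r) (s r) _ hsol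
  have hcoef₁ : (((r / 2 : ℝ) : ℂ))⁻¹ = ((2 / r : ℝ) : ℂ) := by
    rw [← Complex.ofReal_inv, inv_div]
  have hcoef₂ : (((r / 2 : ℝ) : ℂ) ^ 2)⁻¹ = ((4 / r ^ 2 : ℝ) : ℂ) := by
    rw [← Complex.ofReal_pow, ← Complex.ofReal_inv, div_pow, inv_div]
    norm_num
  rw [hcoef₁, hcoef₂, ← hv r] at hrem
  refine (L.le_opNorm _).trans ?_
  calc _ ≤ (‖L‖ + 1) * (2 * c ^ 2 * ‖s r‖ / (r / 2) ^ 3) := by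
        gcongr
        linarith
    _ ≤ (‖L‖ + 1) * (2 * c ^ 2 * 1 / (r / 2) ^ 3) := by gcongr
    _ = _ := by field_simp; norm_num
end

section
/- There exist constants C > 0 and r₀ > 0 such that for all r ≥ r₀ one has |V(r) + (4/r) Σ_{j=1}^n μ_j sin(2μ_j r) − (8/r²)( Σ_{j=1}^n a_j μ_j sin(2μ_j r) + W(r) )| ≤ C r⁻³, where W(r) := ( Σ_{j=1}^n sin²(μ_j r) )² + 2 Σ_{i,j=1}^n h_{ij}(r) μ_i sin(μ_j r) cos(μ_i r). -/
open Matrix MeasureTheory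

open Filter Asymptotics Topology

attribute [local instance] Matrix.linftyOpNormedAddCommGroup Matrix.linftyOpNormedSpace
  Matrix.linftyOpNormedRing Matrix.linftyOpNormedAlgebra

section MatrixCalculus

variable {n : ℕ}

/-- Matrices and doubly indexed families are continuously linearly equivalent. -/
noncomputable def matrixOfCLE (n : ℕ) :
    (Fin n → Fin n → ℂ) ≃L[ℝ] Matrix (Fin n) (Fin n) ℂ :=
  (Matrix.ofLinearEquiv ℝ).toContinuousLinearEquiv

lemma hasDerivAt_matrix_iff {M : ℝ → Matrix (Fin n) (Fin n) ℂ} {M' : Matrix (Fin n) (Fin n) ℂ}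
    {r : ℝ} : HasDerivAt M M' r ↔ ∀ i j, HasDerivAt (fun t => M t i j) (M' i j) r := by
  constructor
  · intro h i j
    have h1 := (matrixOfCLE n).symm.toContinuousLinearMap.hasFDerivAt.comp_hasDerivAt r h
    exact hasDerivAt_pi.1 (hasDerivAt_pi.1 h1 i) j
  · intro h
    have h1 : HasDerivAt (fun t => (matrixOfCLE n).symm (M t)) ((matrixOfCLE n).symm M') r :=
      hasDerivAt_pi.2 fun i => hasDerivAt_pi.2 fun j => h i j
    have h2 := (matrixOfCLE n).toContinuousLinearMap.hasFDerivAt.comp_hasDerivAt r h1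
    exact h2

lemma isBigO_matrix_iff {M : ℝ → Matrix (Fin n) (Fin n) ℂ} {g : ℝ → ℝ} {l : Filter ℝ} :
    M =O[l] g ↔ ∀ i j, (fun t => M t i j) =O[l] g := by
  constructor
  · intro h i j
    have h1 := ((matrixOfCLE n).symm.toContinuousLinearMap.isBigO_comp M l).trans h
    exact isBigO_pi.1 (isBigO_pi.1 h1 i) j
  · intro h
    have h1 : (fun t => (matrixOfCLE n).symm (M t)) =O[l] g :=
      isBigO_pi.2 fun i => isBigO_pi.2 fun j => h i j
    exact ((matrixOfCLE n).toContinuousLinearMap.isBigO_comp _ l).trans h1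

lemma hasDerivAt_matrix_inv {M : ℝ → Matrix (Fin n) (Fin n) ℂ} {M' : Matrix (Fin n) (Fin n) ℂ}
    {r : ℝ} (hM : HasDerivAt M M' r) (hu : IsUnit (M r)) :
    HasDerivAt (fun t => (M t)⁻¹) (-((M r)⁻¹ * M' * (M r)⁻¹)) r := by
  obtain ⟨u, hu⟩ := hu
  have h1 := hasFDerivAt_ringInverse (𝕜 := ℝ) u
  rw [hu] at h1
  have h2 := h1.comp_hasDerivAt r hM
  simp only [Matrix.nonsing_inv_eq_ringInverse]
  rw [← hu, Ring.inverse_unit]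
  exact h2

/-- Derivative of the quadratic form of the inverse of a symmetric matrix whose derivative is the
rank one matrix `s sᵀ`. -/
lemma hasDerivAt_quadratic_inv {M : ℝ → Matrix (Fin n) (Fin n) ℂ} {s : ℝ → Fin n → ℂ}
    {c : Fin n → ℂ} {r : ℝ} (hM : HasDerivAt M (vecMulVec (s r) (s r)) r) (hu : IsUnit (M r))
    (hsymm : (M r).IsSymm) (hs : ∀ i, HasDerivAt (fun t => s t i) (c i) r) :
    HasDerivAt (fun t => s t ⬝ᵥ ((M t)⁻¹ *ᵥ s t))
      (2 * (c ⬝ᵥ ((M r)⁻¹ *ᵥ s r)) - (s r ⬝ᵥ ((M r)⁻¹ *ᵥ s r)) ^ 2) r := by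
  have hP := hasDerivAt_matrix_iff.1 (hasDerivAt_matrix_inv hM hu)
  have hPs : ((M r)⁻¹)ᵀ = (M r)⁻¹ := by rw [Matrix.transpose_nonsing_inv, hsymm.eq]
  have hD : HasDerivAt (fun t => s t ⬝ᵥ ((M t)⁻¹ *ᵥ s t))
      (c ⬝ᵥ ((M r)⁻¹ *ᵥ s r) + s r ⬝ᵥ
        ((-((M r)⁻¹ * vecMulVec (s r) (s r) * (M r)⁻¹)) *ᵥ s r + (M r)⁻¹ *ᵥ c)) r := by
    simp only [dotProduct, mulVec, Pi.add_apply, ← Finset.sum_add_distrib]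
    refine HasDerivAt.fun_sum fun i _ => (hs i).mul (HasDerivAt.fun_sum fun j _ => ?_)
    exact (hP i j).mul (hs j)
  convert hD using 1
  have h1 : s r ⬝ᵥ ((M r)⁻¹ *ᵥ c) = c ⬝ᵥ ((M r)⁻¹ *ᵥ s r) := by
    rw [dotProduct_mulVec, ← mulVec_transpose, hPs, dotProduct_comm]
  have h2 : s r ⬝ᵥ (((M r)⁻¹ * vecMulVec (s r) (s r) * (M r)⁻¹) *ᵥ s r) =
      (s r ⬝ᵥ ((M r)⁻¹ *ᵥ s r)) ^ 2 := by
    rw [← mulVec_mulVec, ← mulVec_mulVec, vecMulVec_mulVec, mulVec_smul, dotProduct_smul]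
    simp [sq]
  rw [dotProduct_add, h1, neg_mulVec, dotProduct_neg, h2]
  ring

lemma isBigO_dotProduct_mulVec {x y : ℝ → Fin n → ℂ} {E : ℝ → Matrix (Fin n) (Fin n) ℂ}
    {g : ℝ → ℝ} {l : Filter ℝ} (hx : ∀ i, (fun t => x t i) =O[l] (fun _ => (1 : ℝ)))
    (hy : ∀ i, (fun t => y t i) =O[l] (fun _ => (1 : ℝ))) (hE : E =O[l] g) :
    (fun t => x t ⬝ᵥ (E t *ᵥ y t)) =O[l] g := by
  simp only [dotProduct, mulVec]
  refine IsBigO.fun_sum fun i _ => ?_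
  have h1 : (fun t => ∑ j, E t i j * y t j) =O[l] g := by
    refine IsBigO.fun_sum fun j _ => ?_
    simpa using (isBigO_matrix_iff.1 hE i j).mul (hy j)
  simpa using (hx i).mul h1

end MatrixCalculus

section ResolventExpansion

variable {R : Type*} [NormedRing R] [NormedAlgebra ℝ R]

lemma resolvent_eq_first_order {P N : R} {r : ℝ} (hr : r ≠ 0)
    (h : P * ((r / 2) • (1 : R) + N) = 1) : P = (2 / r) • (1 : R) - (2 / r) • (P * N) := by
  have h2 : (2 / r) • (P * ((r / 2) • (1 : R) + N)) = (2 / r) • (1 : R) := by rw [h]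
  rw [mul_add, mul_smul_comm, mul_one, smul_add, smul_smul,
    show 2 / r * (r / 2) = 1 by field_simp, one_smul] at h2
  exact eq_sub_of_add_eq h2

lemma resolvent_eq_second_order {P N : R} {r : ℝ} (hr : r ≠ 0)
    (h : P * ((r / 2) • (1 : R) + N) = 1) :
    P = (2 / r) • (1 : R) - (4 / r ^ 2) • N + (4 / r ^ 2) • (P * N * N) := by
  have h1 := resolvent_eq_first_order hr h
  have h2 : P * N = (2 / r) • N - (2 / r) • (P * N * N) := by
    conv_lhs => rw [h1]
    simp [sub_mul]
  conv_lhs => rw [h1, h2]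
  rw [smul_sub, smul_smul, smul_smul, show 2 / r * (2 / r) = 4 / r ^ 2 by field_simp; norm_num]
  abel

lemma isBigO_resolvent {P N : ℝ → R} (hN : N =O[atTop] (fun _ => (1 : ℝ)))
    (h : ∀ᶠ r in atTop, P r * ((r / 2) • (1 : R) + N r) = 1) :
    P =O[atTop] (fun r : ℝ => r⁻¹) := by
  obtain ⟨K, hK⟩ := hN.bound
  refine IsBigO.of_bound (4 * ‖(1 : R)‖) ?_
  filter_upwards [hK, h, eventually_ge_atTop (4 * K), eventually_gt_atTop 0] with r hKr hr h4 h0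
  have h1 := resolvent_eq_first_order h0.ne' hr
  have h2 : ‖P r‖ ≤ 2 / r * ‖(1 : R)‖ + 2 / r * (‖P r‖ * K) := by
    calc ‖P r‖ = ‖(2 / r) • (1 : R) - (2 / r) • (P r * N r)‖ := congrArg norm h1
      _ ≤ ‖(2 / r) • (1 : R)‖ + ‖(2 / r) • (P r * N r)‖ := norm_sub_le _ _
      _ = 2 / r * ‖(1 : R)‖ + 2 / r * ‖P r * N r‖ := by
        rw [norm_smul, norm_smul, Real.norm_of_nonneg (by positivity)]
      _ ≤ _ := by
        gcongr
        refine (norm_mul_le _ _).trans ?_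
        gcongr
        simpa using hKr
  have h3 : 2 / r * (‖P r‖ * K) ≤ ‖P r‖ / 2 := by
    rw [div_mul_eq_mul_div, div_le_iff₀ h0]
    nlinarith [norm_nonneg (P r)]
  rw [Real.norm_of_nonneg (by positivity)]
  have h4 : 4 * ‖(1 : R)‖ * r⁻¹ = 2 * (2 / r * ‖(1 : R)‖) := by ring
  linarith

end ResolventExpansion

lemma integral_sin_mul_sin_self {m : ℝ} (hm : m ≠ 0) (r : ℝ) :
    ∫ ρ in (0 : ℝ)..r, Real.sin (m * ρ) * Real.sin (m * ρ) =
      r / 2 - Real.sin (2 * m * r) / (4 * m) := by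
  have hd : ∀ x ∈ Set.uIcc 0 r, HasDerivAt (fun x => x / 2 - Real.sin (2 * m * x) / (4 * m))
      (Real.sin (m * x) * Real.sin (m * x)) x := by
    intro x _
    have h1 : HasDerivAt (fun x => Real.sin (2 * m * x)) (Real.cos (2 * m * x) * (2 * m)) x := by
      simpa using ((hasDerivAt_id x).const_mul (2 * m)).sin
    refine (((hasDerivAt_id x).div_const 2).sub (h1.div_const (4 * m))).congr_deriv ?_
    rw [mul_assoc 2 m x, Real.cos_two_mul, Real.cos_sq']
    field_simp
    ring
  rw [intervalIntegral.integral_eq_sub_of_hasDerivAt hd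
    (Continuous.intervalIntegrable (by fun_prop) _ _)]
  simp

lemma integral_sin_mul_sin_of_ne {m k : ℝ} (hmk : m - k ≠ 0) (hmk' : m + k ≠ 0) (r : ℝ) :
    ∫ ρ in (0 : ℝ)..r, Real.sin (m * ρ) * Real.sin (k * ρ) =
      Real.sin ((m - k) * r) / (2 * (m - k)) - Real.sin ((m + k) * r) / (2 * (m + k)) := by
  have hd : ∀ x ∈ Set.uIcc 0 r, HasDerivAt
      (fun x => Real.sin ((m - k) * x) / (2 * (m - k)) - Real.sin ((m + k) * x) / (2 * (m + k)))
      (Real.sin (m * x) * Real.sin (k * x)) x := by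
    intro x _
    have h1 : ∀ p : ℝ, HasDerivAt (fun x => Real.sin (p * x)) (Real.cos (p * x) * p) x := by
      intro p
      simpa using ((hasDerivAt_id x).const_mul p).sin
    refine (((h1 (m - k)).div_const (2 * (m - k))).sub
      ((h1 (m + k)).div_const (2 * (m + k)))).congr_deriv ?_
    rw [sub_mul, add_mul, Real.cos_sub, Real.cos_add]
    field_simp
    ring
  rw [intervalIntegral.integral_eq_sub_of_hasDerivAt hd
    (Continuous.intervalIntegrable (by fun_prop) _ _)]
  simp

/-- second-order asymptotic expansion of the potential `V` at infinity. -/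
theorem stmt_18 (n : ℕ) (hn : 1 ≤ n) (μ : Fin n → ℝ)
    (hμpos : ∀ i, 0 < μ i) (hμanti : StrictAnti μ)
    (G : ℝ → Matrix (Fin n) (Fin n) ℂ)
    (hG : ∀ (r : ℝ) (i j : Fin n),
      G r i j = ((∫ ρ in (0:ℝ)..r, Real.sin (μ i * ρ) * Real.sin (μ j * ρ) : ℝ) : ℂ))
    (h : Fin n → Fin n → ℝ → ℝ)
    (hh : ∀ (i j : Fin n) (r : ℝ), h i j r =
      if i = j then -Real.sin (2 * μ i * r) / (4 * μ i)
      else Real.sin ((μ i - μ j) * r) / (2 * (μ i - μ j))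
        - Real.sin ((μ i + μ j) * r) / (2 * (μ i + μ j)))
    (a : Fin n → ℂ) (ha : ∀ j, a j ≠ 0 ∧ 0 ≤ (a j).re) (hinv : ∀ r : ℝ, 0 ≤ r → IsUnit (Matrix.diagonal a + G r))
    (s : ℝ → Fin n → ℂ) (hs : ∀ (r : ℝ) (i : Fin n), s r i = ((Real.sin (μ i * r) : ℝ) : ℂ))
    (v : ℝ → Fin n → ℂ) (hv : ∀ r : ℝ, v r = -((Matrix.diagonal a + G r)⁻¹ *ᵥ s r))
    (V : ℝ → ℂ)
    (hV : ∀ r : ℝ, V r = 2 * deriv (fun t : ℝ => ∑ j, ((Real.sin (μ j * t) : ℝ) : ℂ) * v t j) r)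
    (W : ℝ → ℝ)
    (hW : ∀ r : ℝ, W r = (∑ j, Real.sin (μ j * r) ^ 2) ^ 2
      + 2 * ∑ i, ∑ j, h i j r * (μ i * Real.sin (μ j * r) * Real.cos (μ i * r))) :
    ∃ C > (0:ℝ), ∃ r₀ > (0:ℝ), ∀ r : ℝ, r₀ ≤ r →
      ‖V r + ((4 / r : ℝ) : ℂ) * ((∑ j, μ j * Real.sin (2 * μ j * r) : ℝ) : ℂ)
          - ((8 / r ^ 2 : ℝ) : ℂ) *
              ((∑ j, a j * (μ j : ℂ) * ((Real.sin (2 * μ j * r) : ℝ) : ℂ)) + ((W r : ℝ) : ℂ))‖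
        ≤ C / r ^ 3 := by
  set M : ℝ → Matrix (Fin n) (Fin n) ℂ := fun t => diagonal a + G t with hMdef
  set H : ℝ → Matrix (Fin n) (Fin n) ℂ := fun t => Matrix.of fun i j => ((h i j t : ℝ) : ℂ)
    with hHdef
  set N : ℝ → Matrix (Fin n) (Fin n) ℂ := fun t => diagonal a + H t with hNdef
  set P : ℝ → Matrix (Fin n) (Fin n) ℂ := fun t => (M t)⁻¹ with hPdef
  set c : ℝ → Fin n → ℂ := fun t i => ((Real.cos (μ i * t) * μ i : ℝ) : ℂ) with hcdef
  have hGH : ∀ r, G r = (r / 2) • (1 : Matrix (Fin n) (Fin n) ℂ) + H r := by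
    intro r
    ext i j
    rw [hG]
    by_cases hij : i = j
    · subst hij
      rw [integral_sin_mul_sin_self (hμpos i).ne']
      simp [hHdef, hh]
      ring
    · rw [integral_sin_mul_sin_of_ne (sub_ne_zero.2 (hμanti.injective.ne hij))
        (add_pos (hμpos i) (hμpos j)).ne']
      simp [hHdef, hh, hij]
  have hMN : ∀ r, M r = (r / 2) • (1 : Matrix (Fin n) (Fin n) ℂ) + N r := by
    intro r
    simp only [hMdef, hNdef, hGH]
    abel
  have hGsymm : ∀ r, (M r).IsSymm := by
    intro r
    refine (Matrix.isSymm_diagonal a).add (Matrix.IsSymm.ext fun i j => ?_)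
    simp only [hG, mul_comm]
  have hMderiv : ∀ r, HasDerivAt M (vecMulVec (s r) (s r)) r := by
    intro r
    refine hasDerivAt_matrix_iff.2 fun i j => ?_
    have hc : Continuous fun ρ : ℝ => Real.sin (μ i * ρ) * Real.sin (μ j * ρ) := by fun_prop
    have h1 := (hc.integral_hasStrictDerivAt 0 r).hasDerivAt.ofReal_comp
    have h2 := h1.const_add (diagonal a i j)
    simpa [hMdef, hG, vecMulVec_apply, hs] using h2
  have hsderiv : ∀ r i, HasDerivAt (fun t => s t i) (c r i) r := by
    intro r i
    have h1 : HasDerivAt (fun x => Real.sin (μ i * x)) (Real.cos (μ i * r) * μ i) r := by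
      simpa using ((hasDerivAt_id r).const_mul (μ i)).sin
    simpa only [hs] using h1.ofReal_comp
  have hVeq : ∀ r, 0 ≤ r → V r =
      -4 * (c r ⬝ᵥ (P r *ᵥ s r)) + 2 * (s r ⬝ᵥ (P r *ᵥ s r)) ^ 2 := by
    intro r hr
    have hq := hasDerivAt_quadratic_inv (hMderiv r) (hinv r hr) (hGsymm r) (hsderiv r)
    have hfun : (fun t : ℝ => ∑ j, ((Real.sin (μ j * t) : ℝ) : ℂ) * v t j) =
        fun t => -(s t ⬝ᵥ ((M t)⁻¹ *ᵥ s t)) := by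
      funext t
      simp only [hv, ← hs, dotProduct, Pi.neg_apply, mul_neg, Finset.sum_neg_distrib, hMdef]
    rw [hV, hfun, hq.fun_neg.deriv]
    ring
  have hone : ∀ r, 0 ≤ r → P r * ((r / 2) • (1 : Matrix (Fin n) (Fin n) ℂ) + N r) = 1 := by
    intro r hr
    rw [← hMN]
    exact Matrix.nonsing_inv_mul _ ((Matrix.isUnit_iff_isUnit_det _).1 (hinv r hr))
  have hsinO : ∀ k : ℝ, (fun t : ℝ => Real.sin (k * t)) =O[atTop] (fun _ => (1 : ℝ)) := fun k =>
    IsBigO.of_bound 1 (Eventually.of_forall fun t => by simpa using Real.abs_sin_le_one _)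
  have hsO : ∀ i, (fun t => s t i) =O[atTop] (fun _ => (1 : ℝ)) := by
    intro i
    simpa only [hs] using Complex.isBigO_ofReal_left.2 (hsinO (μ i))
  have hcO : ∀ i, (fun t => c t i) =O[atTop] (fun _ => (1 : ℝ)) := by
    intro i
    refine IsBigO.of_bound |μ i| (Eventually.of_forall fun t => ?_)
    simp only [hcdef, Complex.norm_real, norm_mul, Real.norm_eq_abs, abs_one, mul_one]
    exact mul_le_of_le_one_left (abs_nonneg _) (Real.abs_cos_le_one _)
  have hNO : N =O[atTop] (fun _ => (1 : ℝ)) := by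
    refine (isBigO_const_const _ one_ne_zero _).add (isBigO_matrix_iff.2 fun i j => ?_)
    refine Complex.isBigO_ofReal_left.2 ?_
    rw [funext (hh i j)]
    by_cases hij : i = j
    · simp only [hij, if_true, div_eq_inv_mul]
      exact (hsinO (2 * μ j)).neg_left.const_mul_left (4 * μ j)⁻¹
    · simp only [hij, if_false, div_eq_inv_mul]
      exact ((hsinO _).const_mul_left _).sub ((hsinO _).const_mul_left _)
  have hPO : P =O[atTop] (fun r : ℝ => r⁻¹) :=
    isBigO_resolvent hNO ((eventually_ge_atTop 0).mono hone)
  have hPNO : (fun r => P r * N r) =O[atTop] (fun r : ℝ => r⁻¹) := by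
    simpa using hPO.mul hNO
  have hPNNO : (fun r => P r * N r * N r) =O[atTop] (fun r : ℝ => r⁻¹) := by
    simpa using hPNO.mul hNO
  set S : ℝ → ℂ := fun r => s r ⬝ᵥ s r with hSdef
  set q : ℝ → ℂ := fun r => s r ⬝ᵥ (P r *ᵥ s r) with hqdef
  set e : ℝ → ℂ := fun r => s r ⬝ᵥ ((P r * N r) *ᵥ s r) with hedef
  set d : ℝ → ℂ := fun r => c r ⬝ᵥ ((P r * N r * N r) *ᵥ s r) with hddef
  have hqO : q =O[atTop] (fun r : ℝ => r⁻¹) := isBigO_dotProduct_mulVec hsO hsO hPO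
  have heO : e =O[atTop] (fun r : ℝ => r⁻¹) := isBigO_dotProduct_mulVec hsO hsO hPNO
  have hdO : d =O[atTop] (fun r : ℝ => r⁻¹) := isBigO_dotProduct_mulVec hcO hsO hPNNO
  have hrO : (fun r : ℝ => (r : ℂ)⁻¹) =O[atTop] (fun r : ℝ => r⁻¹) := by
    refine IsBigO.of_bound 1 (Eventually.of_forall fun t => by simp)
  have hSO : S =O[atTop] (fun _ => (1 : ℝ)) := by
    refine IsBigO.fun_sum fun i _ => ?_
    simpa using (hsO i).mul (hsO i)
  have hrSO : (fun r : ℝ => 2 * ((r : ℂ)⁻¹ * S r)) =O[atTop] (fun r : ℝ => r⁻¹) := by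
    simpa using (hrO.mul hSO).const_mul_left (2 : ℂ)
  have hfinal : (fun r : ℝ => -16 * ((r : ℂ)⁻¹ * (r : ℂ)⁻¹ * d r)
      - 4 * ((r : ℂ)⁻¹ * e r * (q r + 2 * ((r : ℂ)⁻¹ * S r)))) =O[atTop]
      (fun r : ℝ => r⁻¹ * r⁻¹ * r⁻¹) :=
    (((hrO.mul hrO).mul hdO).const_mul_left _).sub
      (((hrO.mul heO).mul (hqO.add hrSO)).const_mul_left _)
  have hid : ∀ r : ℝ, 0 < r →
      V r + ((4 / r : ℝ) : ℂ) * ((∑ j, μ j * Real.sin (2 * μ j * r) : ℝ) : ℂ)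
          - ((8 / r ^ 2 : ℝ) : ℂ) *
              ((∑ j, a j * (μ j : ℂ) * ((Real.sin (2 * μ j * r) : ℝ) : ℂ)) + ((W r : ℝ) : ℂ)) =
        -16 * ((r : ℂ)⁻¹ * (r : ℂ)⁻¹ * d r)
          - 4 * ((r : ℂ)⁻¹ * e r * (q r + 2 * ((r : ℂ)⁻¹ * S r))) := by
    intro r hr
    have hr0 : (r : ℂ) ≠ 0 := by exact_mod_cast hr.ne'
    have hq1 : q r = 2 / r * S r - 2 / r * e r := by
      simp only [hqdef]
      rw [resolvent_eq_first_order hr.ne' (hone r hr.le)]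
      simp [sub_mulVec, smul_mulVec, dotProduct_sub, dotProduct_smul, hSdef, hedef]
    have hcP : c r ⬝ᵥ (P r *ᵥ s r) =
        2 / r * (c r ⬝ᵥ s r) - 4 / r ^ 2 * (c r ⬝ᵥ (N r *ᵥ s r)) + 4 / r ^ 2 * d r := by
      rw [resolvent_eq_second_order hr.ne' (hone r hr.le)]
      simp [sub_mulVec, add_mulVec, smul_mulVec, dotProduct_sub, dotProduct_add,
        dotProduct_smul, hddef]
    have hcs : ((∑ j, μ j * Real.sin (2 * μ j * r) : ℝ) : ℂ) = 2 * (c r ⬝ᵥ s r) := by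
      simp only [dotProduct, hcdef, hs, ← Complex.ofReal_mul, ← Complex.ofReal_sum]
      rw [← Complex.ofReal_ofNat, ← Complex.ofReal_mul, Finset.mul_sum]
      congr 1
      refine Finset.sum_congr rfl fun j _ => ?_
      rw [mul_assoc 2 (μ j) r, Real.sin_two_mul]
      ring
    have hcA : (∑ j, a j * (μ j : ℂ) * ((Real.sin (2 * μ j * r) : ℝ) : ℂ)) =
        2 * (c r ⬝ᵥ (diagonal a *ᵥ s r)) := by
      simp only [dotProduct, mulVec_diagonal, Finset.mul_sum, hcdef, hs]
      refine Finset.sum_congr rfl fun j _ => ?_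
      rw [mul_assoc 2 (μ j) r, Real.sin_two_mul]
      push_cast
      ring
    have hWr : ((W r : ℝ) : ℂ) = S r ^ 2 + 2 * (c r ⬝ᵥ (H r *ᵥ s r)) := by
      rw [hW]
      simp only [hSdef, dotProduct, mulVec, hcdef, hs, hHdef, Matrix.of_apply, Finset.mul_sum]
      push_cast
      congr 1
      · simp only [sq]
      · refine Finset.sum_congr rfl fun i _ => Finset.sum_congr rfl fun j _ => ?_
        ring
    have hcN : c r ⬝ᵥ (N r *ᵥ s r) =
        c r ⬝ᵥ (diagonal a *ᵥ s r) + c r ⬝ᵥ (H r *ᵥ s r) := by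
      rw [← dotProduct_add, ← add_mulVec]
    rw [hVeq r hr.le, hcP, hcs, hcA, hWr, hcN]
    change _ + 2 * q r ^ 2 + _ - _ = _
    rw [hq1]
    push_cast
    field_simp
    ring
  obtain ⟨C, hC, hb⟩ := hfinal.exists_pos
  obtain ⟨r₁, hr₁⟩ := eventually_atTop.1 hb.bound
  refine ⟨C, hC, max r₁ 1, by positivity, fun r hr => ?_⟩
  have hr0 : 0 < r := lt_of_lt_of_le one_pos ((le_max_right _ _).trans hr)
  rw [hid r hr0]
  refine (hr₁ r ((le_max_left _ _).trans hr)).trans (le_of_eq ?_)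
  rw [Real.norm_of_nonneg (by positivity)]
  field_simp
end
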